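/- arXiv:cs/0304041 — 2 statements merged into one kernel-verified Lean document; each statement's English description precedes it below -/
import Mathlib

section
/- Let f be an unsatisfiable CNF formula and let G be the graph representation of a Resolution refutation of f. Then for every node u of G and every variable x_i: if the literal x_i appears in the clause u then x_i ∈ Zeros(u), and if the literal ¬x_i appears in the clause u then x_i ∈ Ones(u). -/
/-!
Along an edge of the graph, every literal of the child other than the one resolved away there is
inherited by the parent. Hence a literal on `x` in the clause `u` would survive backwards along a
path that never resolves on `x`, up to the root; as the root clause is empty, every path from the
root to `u` resolves on `x` somewhere. The child the path moves to from the last such node inherits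
the literal from `u`. It also contains the literal on `x` falsified by the edge taken, so, clauses
being non-tautological, the two literals agree and the edge falsifies the literal in `u`.
-/

/-- A clause over variables of type `V`: a finite set of literals, where a literal
is a pair `(x, b)`; `(x, true)` is the literal `x` and `(x, false)` is `¬x`. -/
abbrev Clause (V : Type) := Finset (V × Bool)

/-- An assignment `α` satisfies a clause `C` if it makes some literal of `C` true. -/
def satClause {V : Type} (α : V → Bool) (C : Clause V) : Prop :=
  ∃ l ∈ C, α l.1 = l.2

/-- An assignment satisfies a CNF formula (a finite set of clauses) if it
satisfies every clause. -/
def satCNF {V : Type} (α : V → Bool) (f : Finset (Clause V)) : Prop :=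
  ∀ C ∈ f, satClause α C

/-- A CNF formula is unsatisfiable if no assignment satisfies it. -/
def Unsat {V : Type} (f : Finset (Clause V)) : Prop :=
  ¬ ∃ α : V → Bool, satCNF α f

/-- A Resolution refutation of the CNF formula `f`, given together with its
graph (dag) representation: a sequence of clauses `clause 0, ..., clause (size-1)`
where each clause is either a clause of `f` (a leaf, `step u = none`) or the
resolvent of two earlier clauses (`step u = some (x, a, b)`: the clause `u` is
obtained by resolving clause `a` (containing the literal `x`) and clause `b`
(containing the literal `¬x`) on the variable `x`); the last clause (the root)
is the empty clause. The length of the refutation is `size`. -/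
structure ResolutionProof {V : Type} [DecidableEq V] (f : Finset (Clause V)) where
  size : ℕ
  size_pos : 0 < size
  clause : Fin size → Clause V
  step : Fin size → Option (V × Fin size × Fin size)
  step_axiom : ∀ u, step u = none → clause u ∈ f
  step_lt : ∀ u x a b, step u = some (x, a, b) → (a : ℕ) < (u : ℕ) ∧ (b : ℕ) < (u : ℕ)
  step_res : ∀ u x a b, step u = some (x, a, b) →
    (x, true) ∈ clause a ∧ (x, false) ∈ clause b ∧
    clause u = (clause a).erase (x, true) ∪ (clause b).erase (x, false)
  last_empty : clause ⟨size - 1, Nat.sub_lt size_pos Nat.one_pos⟩ = ∅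

namespace ResolutionProof

variable {V : Type} [DecidableEq V] {f : Finset (Clause V)}

/-- The root of the dag: the last clause (the empty clause). -/
def root (P : ResolutionProof f) : Fin P.size :=
  ⟨P.size - 1, Nat.sub_lt P.size_pos Nat.one_pos⟩

/-- The variable labelling a (non-leaf) node: the variable resolved upon there. -/
def label (P : ResolutionProof f) (u : Fin P.size) : Option V :=
  (P.step u).map Prod.fst

/-- `P.Path u w p` : `p` is a directed path in the dag from `u` to `w`, recorded as
the list of (node, label of the outgoing edge taken) pairs: from a node labelled
`x`, the edge labelled `false` (i.e. 0) leads to the child containing the literal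
`x`, and the edge labelled `true` (i.e. 1) leads to the child containing `¬x`. -/
inductive Path (P : ResolutionProof f) :
    Fin P.size → Fin P.size → List (Fin P.size × Bool) → Prop
  | nil (u : Fin P.size) : Path P u u []
  | cons {u v w : Fin P.size} {x : V} {a b : Fin P.size} {bl : Bool}
      {rest : List (Fin P.size × Bool)}
      (hstep : P.step u = some (x, a, b))
      (hv : v = if bl then b else a)
      (hrest : Path P v w rest) : Path P u w ((u, bl) :: rest)

/-- A path `p` evaluates the variable `x` to `bl` if some node on `p` is labelled
`x`, and after the last node on `p` labelled `x` the path follows the outgoing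
edge labelled `bl`. -/
def Evaluates (P : ResolutionProof f) (p : List (Fin P.size × Bool))
    (x : V) (bl : Bool) : Prop :=
  ∃ i, ∃ hi : i < p.length,
    P.label (p.get ⟨i, hi⟩).1 = some x ∧ (p.get ⟨i, hi⟩).2 = bl ∧
    ∀ j, ∀ hj : j < p.length, i < j → P.label (p.get ⟨j, hj⟩).1 ≠ some x

/-- `Zeros(u)`: the set of variables evaluated to 0 by every path from the root to `u`. -/
def Zeros (P : ResolutionProof f) (u : Fin P.size) : Set V :=
  {x | ∀ p, P.Path P.root u p → P.Evaluates p x false}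

/-- `Ones(u)`: the set of variables evaluated to 1 by every path from the root to `u`. -/
def Ones (P : ResolutionProof f) (u : Fin P.size) : Set V :=
  {x | ∀ p, P.Path P.root u p → P.Evaluates p x true}

/-- A refutation is Regular if along every directed path in its dag each
variable is resolved upon at most once. -/
def Regular (P : ResolutionProof f) : Prop :=
  ∀ u w p, P.Path u w p → (p.map fun s => P.label s.1).Nodup

end ResolutionProof

/-- The pigeon clause `x_{i,1} ∨ ... ∨ x_{i,n}`: pigeon `i` maps to some hole. -/
def pigeonClause (n i : ℕ) : Clause (ℕ × ℕ) :=
  (Finset.Icc 1 n).image fun j => ((i, j), true)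

/-- The hole clause `¬x_{i1,j} ∨ ¬x_{i2,j}`: pigeons `i1` and `i2` do not both
map to hole `j`. -/
def holeClause (j i1 i2 : ℕ) : Clause (ℕ × ℕ) :=
  {((i1, j), false), ((i2, j), false)}

/-- The functionality clause `¬x_{i,j1} ∨ ¬x_{i,j2}`: pigeon `i` does not map to
both hole `j1` and hole `j2`. -/
def funcClause (i j1 j2 : ℕ) : Clause (ℕ × ℕ) :=
  {((i, j1), false), ((i, j2), false)}

/-- The onto clause `x_{1,j} ∨ ... ∨ x_{m,j}`: hole `j` is occupied. -/
def ontoClause (m j : ℕ) : Clause (ℕ × ℕ) :=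
  (Finset.Icc 1 m).image fun i => ((i, j), true)

/-- The CNF formula `¬WPHP^m_n`: the conjunction of all pigeon clauses and hole
clauses, over variables `x_{i,j}` for `1 ≤ i ≤ m`, `1 ≤ j ≤ n`. -/
def WPHPneg (m n : ℕ) : Finset (Clause (ℕ × ℕ)) :=
  ((Finset.Icc 1 m).image fun i => pigeonClause n i) ∪
  (((Finset.Icc 1 m ×ˢ Finset.Icc 1 m ×ˢ Finset.Icc 1 n).filter
      fun t => t.1 < t.2.1).image fun t => holeClause t.2.2 t.1 t.2.1)

/-- The CNF formula `¬FWPHP^m_n` (weak functional PHP): additionally each pigeon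
goes to exactly one hole. -/
def FWPHPneg (m n : ℕ) : Finset (Clause (ℕ × ℕ)) :=
  WPHPneg m n ∪
  (((Finset.Icc 1 m ×ˢ Finset.Icc 1 n ×ˢ Finset.Icc 1 n).filter
      fun t => t.2.1 < t.2.2).image fun t => funcClause t.1 t.2.1 t.2.2)

/-- The CNF formula `¬FOWPHP^m_n` (weak functional onto PHP): additionally every
hole is occupied. -/
def FOWPHPneg (m n : ℕ) : Finset (Clause (ℕ × ℕ)) :=
  FWPHPneg m n ∪ ((Finset.Icc 1 n).image fun j => ontoClause m j)

/-- A clause is non-tautological if it does not contain both a variable and its negation, so that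
the variable determines the sign of its literal. A separate predicate, since `Clause` admits
tautologies and resolvents can be tautological. -/
def Clause.Nontautological {V : Type} (C : Clause V) : Prop :=
  ∀ x, ¬((x, true) ∈ C ∧ (x, false) ∈ C)

theorem Clause.Nontautological.sign_unique {V : Type} {C : Clause V} (hC : C.Nontautological)
    {x : V} {b c : Bool} (hb : (x, b) ∈ C) (hc : (x, c) ∈ C) : b = c := by
  cases b <;> cases c
  · rfl
  · exact (hC x ⟨hc, hb⟩).elim
  · exact (hC x ⟨hb, hc⟩).elim
  · rfl

namespace ResolutionProof

variable {V : Type} [DecidableEq V] {f : Finset (Clause V)} {P : ResolutionProof f}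

theorem clause_root (P : ResolutionProof f) : P.clause P.root = ∅ :=
  P.last_empty

section Edge

variable {u a b : Fin P.size} {x : V}

theorem label_eq_some_of_step (hstep : P.step u = some (x, a, b)) : P.label u = some x := by
  simp [label, hstep]

theorem pivot_mem_clause_child (hstep : P.step u = some (x, a, b)) (bl : Bool) :
    (x, !bl) ∈ P.clause (if bl then b else a) := by
  obtain ⟨ha, hb, -⟩ := P.step_res u x a b hstep
  cases bl
  · exact ha
  · exact hb

theorem mem_clause_of_mem_clause_child (hstep : P.step u = some (x, a, b)) {bl : Bool}
    {l : V × Bool} (hl : l ∈ P.clause (if bl then b else a)) (hne : l ≠ (x, !bl)) :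
    l ∈ P.clause u := by
  obtain ⟨-, -, hu⟩ := P.step_res u x a b hstep
  rw [hu]
  cases bl
  · exact Finset.mem_union_left _ (Finset.mem_erase.2 ⟨hne, hl⟩)
  · exact Finset.mem_union_right _ (Finset.mem_erase.2 ⟨hne, hl⟩)

end Edge

section Evaluates

variable {p : List (Fin P.size × Bool)} {s : Fin P.size × Bool} {x : V} {bl : Bool}

theorem Evaluates.cons (h : P.Evaluates p x bl) (s : Fin P.size × Bool) :
    P.Evaluates (s :: p) x bl := by
  obtain ⟨i, hi, hlabel, hedge, hlast⟩ := h
  refine ⟨i + 1, Nat.succ_lt_succ hi, hlabel, hedge, ?_⟩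
  rintro (_ | j) hj hij
  · exact absurd hij (Nat.not_lt_zero _)
  · exact hlast j (Nat.lt_of_succ_lt_succ hj) (Nat.lt_of_succ_lt_succ hij)

theorem evaluates_cons_of_forall_label_ne (hs : P.label s.1 = some x)
    (hp : ∀ t ∈ p, P.label t.1 ≠ some x) : P.Evaluates (s :: p) x s.2 := by
  refine ⟨0, Nat.succ_pos _, hs, rfl, ?_⟩
  rintro (_ | j) hj hij
  · exact absurd hij (Nat.lt_irrefl 0)
  · exact hp _ (List.get_mem p ⟨j, Nat.lt_of_succ_lt_succ hj⟩)

end Evaluates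

namespace Path

variable {u w : Fin P.size} {p : List (Fin P.size × Bool)} {x : V} {c : Bool}

theorem mem_clause_of_forall_label_ne (hp : P.Path u w p) (hx : (x, c) ∈ P.clause w)
    (hlabel : ∀ s ∈ p, P.label s.1 ≠ some x) : (x, c) ∈ P.clause u := by
  induction hp with
  | nil => exact hx
  | @cons _ _ _ y _ _ _ _ hstep hv _ ih =>
    obtain ⟨hhead, htail⟩ := List.forall_mem_cons.1 hlabel
    subst hv
    have hxy : x ≠ y := by
      rintro rfl
      exact hhead (label_eq_some_of_step hstep)
    exact mem_clause_of_mem_clause_child hstep (ih hx htail) fun heq => hxy (congrArg Prod.fst heq)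

theorem evaluates_of_exists_label_eq (hnotaut : ∀ v, (P.clause v).Nontautological)
    (hp : P.Path u w p) (hx : (x, c) ∈ P.clause w) (hlabel : ∃ s ∈ p, P.label s.1 = some x) :
    P.Evaluates p x (!c) := by
  induction hp with
  | nil => simp at hlabel
  | @cons u _ _ y _ _ bl rest hstep hv hrest ih =>
    by_cases htail : ∃ s ∈ rest, P.label s.1 = some x
    · exact (ih hx htail).cons _
    simp only [List.mem_cons, exists_eq_or_imp] at hlabel
    have hu : P.label u = some x := hlabel.resolve_right htail
    push Not at htail
    obtain rfl : y = x := Option.some.inj ((label_eq_some_of_step hstep).symm.trans hu)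
    subst hv
    have hchild := hrest.mem_clause_of_forall_label_ne hx htail
    obtain rfl : c = !bl := (hnotaut _).sign_unique hchild (pivot_mem_clause_child hstep bl)
    rw [Bool.not_not]
    exact evaluates_cons_of_forall_label_ne hu htail

theorem exists_label_eq_of_root (hp : P.Path P.root w p) (hx : (x, c) ∈ P.clause w) :
    ∃ s ∈ p, P.label s.1 = some x := by
  by_contra! hlabel
  have hroot := hp.mem_clause_of_forall_label_ne hx hlabel
  rw [clause_root] at hroot
  exact Finset.notMem_empty _ hroot

theorem evaluates_of_root (hnotaut : ∀ v, (P.clause v).Nontautological)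
    (hp : P.Path P.root w p) (hx : (x, c) ∈ P.clause w) : P.Evaluates p x (!c) :=
  hp.evaluates_of_exists_label_eq hnotaut hx (hp.exists_label_eq_of_root hx)

end Path

end ResolutionProof

/-- for every node `u` of a Resolution refutation of an
unsatisfiable CNF `f` (in which no clause contains both a variable and its
negation) and every variable `x`: if the literal `x` appears in the clause `u`
then `x ∈ Zeros(u)`, and if the literal `¬x` appears in the clause `u` then
`x ∈ Ones(u)`. -/
theorem literal_in_zeros_ones {V : Type} [DecidableEq V]
    (f : Finset (Clause V)) (hf : Unsat f) (P : ResolutionProof f)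
    (hnotaut : ∀ u : Fin P.size, ∀ x : V,
      ¬((x, true) ∈ P.clause u ∧ (x, false) ∈ P.clause u))
    (u : Fin P.size) (x : V) :
    ((x, true) ∈ P.clause u → x ∈ P.Zeros u) ∧
    ((x, false) ∈ P.clause u → x ∈ P.Ones u) := by
  exact ⟨fun hx _ hp => hp.evaluates_of_root hnotaut hx,
    fun hx _ hp => hp.evaluates_of_root hnotaut hx⟩
end

section
/- There exist a constant c > 0 and a natural number k such that for every n ≥ 1 the CNF formula ¬PHP_n (that is, ¬WPHP^{n+1}_n) has a Regular Resolution refutation of length at most c · 2^n · n^k. -/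
/-!
For a set `T` of `i` holes let `P_T` be the clause saying that one of the pigeons `1, ..., i + 1`
sits in a hole outside `T`. For the set of all holes it is the empty clause. The clause `P_T` is
obtained from the pigeon clause of `i + 1` by resolving away the variables `x_{i+1,j}`, `j ∈ T`,
against the clauses "some pigeon `p ≤ i` is outside `T`, or pigeon `i + 1` is not in `j`". Each of
these in turn comes from `P_{T \ {j}}` by resolving away the variables `x_{p,j}`, `p ≤ i`, against
the hole clauses of `p` and `i + 1`. So there are at most `(n + 1) * 2 ^ n` target clauses, each
reached by at most `n` resolutions. Below `P_T` only variables in `{1, ..., i + 1} × T` are resolved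
upon, and the sets so attached to the clauses shrink from a target to its premises, which makes the
refutation regular.
-/

section

open Finset

variable {V : Type}

/-- The clause consisting of the variables in `X`, unnegated. -/
def posClause (X : Finset V) : Clause V := X ×ˢ ({true} : Finset Bool)

theorem mem_posClause {X : Finset V} {l : V × Bool} : l ∈ posClause X ↔ l.1 ∈ X ∧ l.2 = true := by
  simp only [posClause, mem_product, mem_singleton]

/-- A node of a regular derivation: a clause together with a finite set of variables containing
every variable resolved upon at or below it. -/
abbrev Node (V : Type) := Clause V × Finset V

/-- `Derives G K W`: some node of `G` has a clause contained in `K` and variables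
contained in `W`, so that `K` follows by weakening. -/
def Derives (G : Finset (Node V)) (K : Clause V) (W : Finset V) : Prop :=
  ∃ u ∈ G, u.1 ⊆ K ∧ u.2 ⊆ W

/-- The clauses of `f` as nodes at which nothing is resolved upon. -/
def axiomNodes (f : Finset (Clause V)) : Finset (Node V) := f ×ˢ {∅}

namespace Derives

variable {G G' : Finset (Node V)} {K K' : Clause V} {W W' : Finset V}

theorem mono (h : Derives G K W) (hK : K ⊆ K') (hW : W ⊆ W') : Derives G K' W' :=
  let ⟨u, hu, huK, huW⟩ := h
  ⟨u, hu, huK.trans hK, huW.trans hW⟩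

theorem mono_nodes (h : Derives G K W) (hG : G ⊆ G') : Derives G' K W :=
  let ⟨u, hu, huKW⟩ := h
  ⟨u, hG hu, huKW⟩

theorem trans (h : Derives G K W) (hG : ∀ u ∈ G, Derives G' u.1 u.2) : Derives G' K W :=
  let ⟨u, hu, huK, huW⟩ := h
  (hG u hu).mono huK huW

theorem of_mem {u : Node V} (hu : u ∈ G) : Derives G u.1 u.2 :=
  ⟨u, hu, subset_rfl, subset_rfl⟩

end Derives

variable [DecidableEq V] {f : Finset (Clause V)}

theorem Derives.of_insert {G : Finset (Node V)} {K : Clause V} {W : Finset V} {u : Node V}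
    (h : Derives (insert u G) K W) (hW : #W < #u.2) : Derives G K W := by
  obtain ⟨v, hv, hvK, hvW⟩ := h
  rcases mem_insert.1 hv with rfl | hv
  · exact absurd (card_le_card hvW) hW.not_ge
  · exact ⟨v, hv, hvK, hvW⟩

namespace ResolutionProof

theorem exists_label_eq_of_path {P : ResolutionProof f} {W : Fin P.size → Finset V}
    (hW : ∀ u x a b, P.step u = some (x, a, b) →
      x ∈ W u ∧ W a ⊆ (W u).erase x ∧ W b ⊆ (W u).erase x)
    {u w : Fin P.size} {p : List (Fin P.size × Bool)} (hp : P.Path u w p) :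
    ∀ s ∈ p, ∃ x ∈ W u, P.label s.1 = some x := by
  induction hp with
  | nil => simp
  | @cons u v _ x a b bl _ hstep hv _ ih =>
    obtain ⟨hx, ha, hb⟩ := hW u x a b hstep
    have hvu : W v ⊆ (W u).erase x := by cases bl <;> simpa [hv]
    intro s hs
    rcases List.mem_cons.1 hs with rfl | hs
    · exact ⟨x, hx, by simp [label, hstep]⟩
    · obtain ⟨y, hy, hsy⟩ := ih s hs
      exact ⟨y, mem_of_mem_erase (hvu hy), hsy⟩

theorem regular_of_erase {P : ResolutionProof f} {W : Fin P.size → Finset V}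
    (hW : ∀ u x a b, P.step u = some (x, a, b) →
      x ∈ W u ∧ W a ⊆ (W u).erase x ∧ W b ⊆ (W u).erase x) : P.Regular := by
  intro u w p hp
  induction hp with
  | nil => simp
  | @cons u v _ x a b bl _ hstep hv hrest ih =>
    obtain ⟨-, ha, hb⟩ := hW u x a b hstep
    have hvu : W v ⊆ (W u).erase x := by cases bl <;> simpa [hv]
    refine List.nodup_cons.2 ⟨fun hmem => ?_, ih⟩
    obtain ⟨s, hs, hsx⟩ := List.mem_map.1 hmem
    obtain ⟨y, hy, hsy⟩ := exists_label_eq_of_path hW hrest s hs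
    have hxy : some y = some x := hsy.symm.trans (hsx.trans (by simp [label, hstep]))
    exact ne_of_mem_erase (hvu hy) (Option.some.inj hxy)

end ResolutionProof

/-- `IsRegularResolvent x a b u`: the clause of `u` is the resolvent on `x` of those of `a` and `b`,
and `x` is among the variables of `u` but not among those of `a` and `b`, which `u` contains. -/
structure IsRegularResolvent (x : V) (a b u : Node V) : Prop where
  pivot_mem : x ∈ u.2
  vars_left : a.2 ⊆ u.2.erase x
  vars_right : b.2 ⊆ u.2.erase x
  pos_mem : (x, true) ∈ a.1
  neg_mem : (x, false) ∈ b.1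
  clause_eq : u.1 = a.1.erase (x, true) ∪ b.1.erase (x, false)

/-- A finite set of nodes closed under premises: each one is a clause of `f` or a regular resolvent
of two nodes of the set. No order is recorded, since premises have smaller variable sets. -/
def IsRegularDerivation (f : Finset (Clause V)) (G : Finset (Node V)) : Prop :=
  ∀ u ∈ G, u.1 ∈ f ∨ ∃ x, ∃ a ∈ G, ∃ b ∈ G, IsRegularResolvent x a b u

namespace IsRegularResolvent

variable {x : V} {a b u : Node V}

theorem card_left_lt (h : IsRegularResolvent x a b u) : #a.2 < #u.2 :=
  (card_le_card h.vars_left).trans_lt (card_erase_lt_of_mem h.pivot_mem)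

theorem card_right_lt (h : IsRegularResolvent x a b u) : #b.2 < #u.2 :=
  (card_le_card h.vars_right).trans_lt (card_erase_lt_of_mem h.pivot_mem)

end IsRegularResolvent

theorem exists_regular_of_sequence {s : ℕ} (ν : Fin (s + 1) → Node V)
    (hν : ∀ u, (ν u).1 ∈ f ∨ ∃ x, ∃ a < u, ∃ b < u, IsRegularResolvent x (ν a) (ν b) (ν u))
    (hlast : (ν (Fin.last s)).1 = ∅) :
    ∃ P : ResolutionProof f, P.Regular ∧ P.size = s + 1 := by
  have hstep : ∀ u, ∃ t : Option (V × Fin (s + 1) × Fin (s + 1)), (t = none → (ν u).1 ∈ f) ∧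
      ∀ x a b, t = some (x, a, b) → a < u ∧ b < u ∧ IsRegularResolvent x (ν a) (ν b) (ν u) := by
    intro u
    rcases hν u with hu | ⟨x, a, ha, b, hb, hres⟩
    · exact ⟨none, fun _ => hu, by simp⟩
    · refine ⟨some (x, a, b), by simp, ?_⟩
      rintro _ _ _ ⟨⟩
      exact ⟨ha, hb, hres⟩
  choose step hnone hsome using hstep
  let P : ResolutionProof f :=
    { size := s + 1
      size_pos := s.succ_pos
      clause := fun u => (ν u).1
      step := step
      step_axiom := hnone
      step_lt := fun u x a b h => ⟨(hsome u x a b h).1, (hsome u x a b h).2.1⟩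
      step_res := fun u x a b h =>
        have hres := (hsome u x a b h).2.2
        ⟨hres.pos_mem, hres.neg_mem, hres.clause_eq⟩
      last_empty := hlast }
  have hreg : P.Regular := ResolutionProof.regular_of_erase (W := fun u => (ν u).2)
    fun u x a b h =>
      have hres := (hsome u x a b h).2.2
      ⟨hres.pivot_mem, hres.vars_left, hres.vars_right⟩
  exact ⟨P, hreg, rfl⟩

theorem exists_equiv_fin_monotone {α : Type*} (G : Finset α) (r : α → ℕ) :
    ∃ e : Fin #G ≃ G, Monotone fun i => r (e i).1 :=
  let g (i : Fin #G) : ℕ := r (G.equivFin.symm i).1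
  ⟨(Tuple.sort g).trans G.equivFin.symm, Tuple.monotone_sort g⟩

namespace IsRegularDerivation

variable {G : Finset (Node V)}

theorem exists_regular (hG : IsRegularDerivation f G) {W : Finset V} (h : Derives G ∅ W) :
    ∃ P : ResolutionProof f, P.Regular ∧ P.size ≤ #G := by
  obtain ⟨root, hroot, hempty, -⟩ := h
  obtain ⟨e, he⟩ := exists_equiv_fin_monotone G fun u => #u.2
  let r := e.symm ⟨root, hroot⟩
  let ν (u : Fin (r.1 + 1)) : Node V := (e (u.castLE r.2)).1
  have hlast : (ν (Fin.last r)).1 = ∅ := by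
    have hr : (Fin.last r.1).castLE r.2 = e.symm ⟨root, hroot⟩ := rfl
    simp only [ν, hr, e.apply_symm_apply]
    exact subset_empty.1 hempty
  have hpremise {u : Fin (r.1 + 1)} {a : Node V} (ha : a ∈ G) (hau : #a.2 < #(ν u).2) :
      ∃ a' < u, ν a' = a := by
    have hlt : e.symm ⟨a, ha⟩ < u.castLE r.2 := he.reflect_lt (by simpa [ν] using hau)
    exact ⟨⟨e.symm ⟨a, ha⟩, (Fin.lt_def.1 hlt).trans u.2⟩, hlt, by simp [ν]⟩
  have hν (u : Fin (r.1 + 1)) : (ν u).1 ∈ f ∨ ∃ x, ∃ a < u, ∃ b < u,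
      IsRegularResolvent x (ν a) (ν b) (ν u) := by
    refine (hG (ν u) (e (u.castLE r.2)).2).imp_right ?_
    rintro ⟨x, a, ha, b, hb, hres⟩
    obtain ⟨a, hau, rfl⟩ := hpremise ha hres.card_left_lt
    obtain ⟨b, hbu, rfl⟩ := hpremise hb hres.card_right_lt
    exact ⟨x, a, hau, b, hbu, hres⟩
  obtain ⟨P, hP, hsize⟩ := exists_regular_of_sequence ν hν hlast
  exact ⟨P, hP, hsize.trans_le r.2⟩

theorem insert_resolvent (hG : IsRegularDerivation f G) {x : V} {a b u : Node V} (ha : a ∈ G)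
    (hb : b ∈ G) (hu : IsRegularResolvent x a b u) : IsRegularDerivation f (insert u G) := by
  intro v hv
  rcases mem_insert.1 hv with rfl | hv
  · exact Or.inr ⟨x, a, mem_insert_of_mem ha, b, mem_insert_of_mem hb, hu⟩
  · exact (hG v hv).imp_right fun ⟨y, c, hc, d, hd, hres⟩ =>
      ⟨y, c, mem_insert_of_mem hc, d, mem_insert_of_mem hd, hres⟩

-- A resolution whose pivot is missing from one of the premises is skipped: that premise already
-- subsumes the resolvent.
theorem exists_resolve (hG : IsRegularDerivation f G) {K : Clause V} {W : Finset V} {x : V}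
    (hx : x ∈ W) (hpos : Derives G (insert (x, true) K) (W.erase x))
    (hneg : Derives G (insert (x, false) K) (W.erase x)) :
    ∃ G', G ⊆ G' ∧ IsRegularDerivation f G' ∧ #G' ≤ #G + 1 ∧ Derives G' K W := by
  obtain ⟨a, ha, haK, haW⟩ := hpos
  obtain ⟨b, hb, hbK, hbW⟩ := hneg
  by_cases hxa : (x, true) ∈ a.1
  · by_cases hxb : (x, false) ∈ b.1
    · refine ⟨_, subset_insert _ _, hG.insert_resolvent ha hb
        (u := (a.1.erase (x, true) ∪ b.1.erase (x, false), W)) ⟨hx, haW, hbW, hxa, hxb, rfl⟩,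
        card_insert_le _ _, _, mem_insert_self _ _, ?_, subset_rfl⟩
      exact union_subset (subset_insert_iff.1 haK) (subset_insert_iff.1 hbK)
    · exact ⟨G, subset_rfl, hG, Nat.le_succ _, b, hb, (subset_insert_iff_of_notMem hxb).1 hbK,
        hbW.trans (erase_subset _ _)⟩
  · exact ⟨G, subset_rfl, hG, Nat.le_succ _, a, ha, (subset_insert_iff_of_notMem hxa).1 haK,
      haW.trans (erase_subset _ _)⟩

theorem exists_resolve_all (hG : IsRegularDerivation f G) {K : Clause V} {W X : Finset V}
    (hX : Disjoint X W) (hpos : Derives G (K ∪ posClause X) W)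
    (hneg : ∀ x ∈ X, Derives G (insert (x, false) K) W) :
    ∃ G', G ⊆ G' ∧ IsRegularDerivation f G' ∧ #G' ≤ #G + #X ∧ Derives G' K (W ∪ X) := by
  induction X using Finset.induction_on generalizing K with
  | empty => exact ⟨G, subset_rfl, hG, le_rfl, by simpa [posClause] using hpos⟩
  | insert x X hxX ih =>
    obtain ⟨hxW, hX⟩ := disjoint_insert_left.1 hX
    obtain ⟨G₁, hGG₁, hG₁, hcard₁, hpos₁⟩ := ih (K := insert (x, true) K) hX
      (hpos.mono (by grind [mem_posClause]) subset_rfl)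
      fun y hy => (hneg y (mem_insert_of_mem hy)).mono (by grind) subset_rfl
    have herase : (W ∪ insert x X).erase x = W ∪ X := by grind
    have hneg₁ : Derives G₁ (insert (x, false) K) (W ∪ X) :=
      ((hneg x (mem_insert_self x X)).mono subset_rfl subset_union_left).mono_nodes hGG₁
    obtain ⟨G₂, hG₁G₂, hG₂, hcard₂, h₂⟩ := hG₁.exists_resolve (W := W ∪ insert x X) (x := x)
      (by simp) (by rwa [herase]) (by rwa [herase])
    refine ⟨G₂, hGG₁.trans hG₁G₂, hG₂, ?_, h₂⟩
    rw [card_insert_of_notMem hxX]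
    lia

end IsRegularDerivation

/-- `IsHyperresolvent G m u`: up to weakening, the clause of `u` arises from nodes of `G` by
resolving away at most `m` positive literals from one clause, each against a clause that contains
its negation. The set `X` of pivots is nonempty, so that `u` is never among its own premises. -/
def IsHyperresolvent (G : Finset (Node V)) (m : ℕ) (u : Node V) : Prop :=
  ∃ X ⊆ u.2, X.Nonempty ∧ #X ≤ m ∧ Derives G (u.1 ∪ posClause X) (u.2 \ X) ∧
    ∀ x ∈ X, Derives G (insert (x, false) u.1) (u.2 \ X)

namespace IsHyperresolvent

variable {G G' : Finset (Node V)} {m : ℕ} {u v : Node V}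

theorem trans (h : IsHyperresolvent G m u) (hG : ∀ v ∈ G, Derives G' v.1 v.2) :
    IsHyperresolvent G' m u :=
  let ⟨X, hXu, hX, hXm, hpos, hneg⟩ := h
  ⟨X, hXu, hX, hXm, hpos.trans hG, fun x hx => (hneg x hx).trans hG⟩

theorem of_insert (h : IsHyperresolvent (insert v G) m u) (huv : #u.2 ≤ #v.2) :
    IsHyperresolvent G m u := by
  obtain ⟨X, hXu, hX, hXm, hpos, hneg⟩ := h
  have hlt : #(u.2 \ X) < #v.2 := (card_lt_card (sdiff_ssubset hXu hX)).trans_le huv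
  exact ⟨X, hXu, hX, hXm, hpos.of_insert hlt, fun x hx => (hneg x hx).of_insert hlt⟩

theorem exists_derives (h : IsHyperresolvent G m u) (hG : IsRegularDerivation f G) :
    ∃ G', G ⊆ G' ∧ IsRegularDerivation f G' ∧ #G' ≤ #G + m ∧ Derives G' u.1 u.2 := by
  obtain ⟨X, hXu, -, hXm, hpos, hneg⟩ := h
  obtain ⟨G', hGG', hG', hcard, hu⟩ := hG.exists_resolve_all disjoint_sdiff hpos hneg
  rw [sdiff_union_of_subset hXu] at hu
  exact ⟨G', hGG', hG', by lia, hu⟩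

end IsHyperresolvent

theorem isRegularDerivation_axiomNodes : IsRegularDerivation f (axiomNodes f) :=
  fun _ hu => Or.inl (mem_product.1 hu).1

theorem derives_axiomNodes_union {H : Finset (Node V)} {C K : Clause V} {W : Finset V} (hC : C ∈ f)
    (hCK : C ⊆ K) : Derives (axiomNodes f ∪ H) K W :=
  ⟨(C, ∅), mem_union_left _ (mem_product.2 ⟨hC, mem_singleton_self _⟩), hCK, empty_subset _⟩

theorem exists_isRegularDerivation_of_isHyperresolvent {H : Finset (Node V)} {m : ℕ}
    (hH : ∀ u ∈ H, IsHyperresolvent (axiomNodes f ∪ H) m u) :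
    ∃ G, IsRegularDerivation f G ∧ #G ≤ #f + #H * m ∧
      ∀ u ∈ axiomNodes f ∪ H, Derives G u.1 u.2 := by
  induction H using Finset.induction_on_max_value (fun u : Node V => #u.2) with
  | empty =>
    exact ⟨axiomNodes f, isRegularDerivation_axiomNodes, by simp [axiomNodes],
      fun u hu => .of_mem (by simpa using hu)⟩
  | insert u H huH hmax ih =>
    simp only [union_insert] at hH ⊢
    obtain ⟨G, hG, hcard, hGH⟩ := ih fun v hv =>
      (hH v (mem_insert_of_mem hv)).of_insert (hmax v hv)
    have hu := ((hH u (mem_insert_self u H)).of_insert le_rfl).trans hGH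
    obtain ⟨G', hGG', hG', hcard', hu'⟩ := hu.exists_derives hG
    refine ⟨G', hG', ?_, (forall_mem_insert _ _ _).2 ⟨hu', fun v hv => (hGH v hv).mono_nodes hGG'⟩⟩
    rw [card_insert_of_notMem huH, Nat.succ_mul]
    lia

theorem exists_regular_of_isHyperresolvent {H : Finset (Node V)} {m : ℕ} {W : Finset V}
    (hH : ∀ u ∈ H, IsHyperresolvent (axiomNodes f ∪ H) m u)
    (hempty : Derives (axiomNodes f ∪ H) ∅ W) :
    ∃ P : ResolutionProof f, P.Regular ∧ P.size ≤ #f + #H * m := by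
  obtain ⟨G, hG, hcard, hGH⟩ := exists_isRegularDerivation_of_isHyperresolvent hH
  obtain ⟨P, hP, hsize⟩ := hG.exists_regular (hempty.trans hGH)
  exact ⟨P, hP, hsize.trans hcard⟩

/-- The positive clause saying that one of the pigeons `1, ..., i` sits in a hole outside `T`. -/
def outsideClause (n i : ℕ) (T : Finset ℕ) : Clause (ℕ × ℕ) :=
  posClause (Icc 1 i ×ˢ (Icc 1 n \ T))

/-- The clause `P_T`, with the variables resolved upon below it: one of the pigeons
`1, ..., |T| + 1`, which do not fit into `T`, is outside. -/
def outsideNode (n : ℕ) (T : Finset ℕ) : Node (ℕ × ℕ) :=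
  (outsideClause n (#T + 1) T, Icc 1 (#T + 1) ×ˢ T)

/-- The clause "one of the pigeons `1, ..., |T|` is outside `T`, or pigeon `|T| + 1` is not in `j`",
used for `j ∈ T`. -/
def avoidNode (n : ℕ) (T : Finset ℕ) (j : ℕ) : Node (ℕ × ℕ) :=
  (insert ((#T + 1, j), false) (outsideClause n #T T), Icc 1 #T ×ˢ T)

/-- The targets of the refutation. The empty set is left out because `P_∅` is a pigeon clause. -/
def phpNodes (n : ℕ) : Finset (Node (ℕ × ℕ)) :=
  ((Icc 1 n).powerset.erase ∅).image (outsideNode n) ∪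
    (((Icc 1 n).powerset ×ˢ Icc 1 n).filter fun t => t.2 ∈ t.1).image fun t => avoidNode n t.1 t.2

variable {m n i j p q : ℕ} {T : Finset ℕ}

theorem outsideNode_mem_phpNodes (hT : T ⊆ Icc 1 n) (hne : T.Nonempty) :
    outsideNode n T ∈ phpNodes n :=
  mem_union_left _ (mem_image_of_mem _ (mem_erase.2 ⟨hne.ne_empty, mem_powerset.2 hT⟩))

theorem avoidNode_mem_phpNodes (hT : T ⊆ Icc 1 n) (hj : j ∈ T) : avoidNode n T j ∈ phpNodes n :=
  mem_union_right _ (mem_image.2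
    ⟨(T, j), mem_filter.2 ⟨mem_product.2 ⟨mem_powerset.2 hT, hT hj⟩, hj⟩, rfl⟩)

theorem card_phpNodes_le (n : ℕ) : #(phpNodes n) ≤ 2 ^ n * (n + 1) := by
  have hpow : #(Icc 1 n).powerset = 2 ^ n := by simp
  calc #(phpNodes n)
      ≤ #((Icc 1 n).powerset.erase ∅) +
          #(((Icc 1 n).powerset ×ˢ Icc 1 n).filter fun t => t.2 ∈ t.1) :=
        (card_union_le _ _).trans (Nat.add_le_add card_image_le card_image_le)
    _ ≤ #(Icc 1 n).powerset + #((Icc 1 n).powerset ×ˢ Icc 1 n) :=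
        Nat.add_le_add card_erase_le (card_filter_le _ _)
    _ = 2 ^ n * (n + 1) := by
        rw [card_product, hpow, Nat.card_Icc, Nat.add_sub_cancel]
        ring

theorem pigeonClause_mem_WPHPneg (hi : i ∈ Icc 1 m) : pigeonClause n i ∈ WPHPneg m n :=
  mem_union_left _ (mem_image_of_mem _ hi)

theorem holeClause_mem_WPHPneg (hp : p ∈ Icc 1 m) (hq : q ∈ Icc 1 m) (hpq : p < q)
    (hj : j ∈ Icc 1 n) : holeClause j p q ∈ WPHPneg m n :=
  mem_union_right _ (mem_image.2 ⟨(p, q, j), by simp_all, rfl⟩)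

theorem card_WPHPneg_le (m n : ℕ) : #(WPHPneg m n) ≤ m + m * (m * n) := by
  refine (card_union_le _ _).trans (Nat.add_le_add ?_ ?_)
  · exact card_image_le.trans (by simp)
  · exact card_image_le.trans ((card_filter_le _ _).trans (by simp))

theorem derives_outsideNode (hm : 1 ≤ m) (hT : T ⊆ Icc 1 n) :
    Derives (axiomNodes (WPHPneg m n) ∪ phpNodes n) (outsideNode n T).1 (outsideNode n T).2 := by
  rcases T.eq_empty_or_nonempty with rfl | hne
  · refine derives_axiomNodes_union (pigeonClause_mem_WPHPneg (i := 1) (by simpa)) fun l hl => ?_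
    obtain ⟨q, hq, rfl⟩ := mem_image.1 hl
    simpa [outsideNode, outsideClause, posClause] using hq
  · exact .of_mem (mem_union_right _ (outsideNode_mem_phpNodes hT hne))

theorem isHyperresolvent_avoidNode (hnm : n < m) (hT : T ⊆ Icc 1 n) (hj : j ∈ T) :
    IsHyperresolvent (axiomNodes (WPHPneg m n) ∪ phpNodes n) n (avoidNode n T j) := by
  have hcard : #T ≤ n := by simpa using card_le_card hT
  have hpos : 1 ≤ #T := card_pos.2 ⟨j, hj⟩
  have herase : #(T.erase j) + 1 = #T := card_erase_add_one hj
  refine ⟨Icc 1 #T ×ˢ {j}, ?_, ?_, by simpa, ?_, ?_⟩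
  · exact product_subset_product_right (singleton_subset_iff.2 hj)
  · exact ⟨(1, j), mem_product.2 ⟨mem_Icc.2 ⟨le_rfl, hpos⟩, mem_singleton_self j⟩⟩
  · refine (derives_outsideNode (by lia) ((erase_subset j T).trans hT)).mono ?_ ?_
    · rintro ⟨⟨p, q⟩, c⟩ hl
      simp only [outsideNode, avoidNode, outsideClause] at hl ⊢
      grind [mem_posClause]
    · rintro ⟨p, q⟩ hl
      simp only [outsideNode, avoidNode] at hl ⊢
      grind
  · rintro ⟨p, j'⟩ hx
    obtain ⟨hp, hj'⟩ := mem_product.1 hx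
    obtain rfl := mem_singleton.1 hj'
    refine derives_axiomNodes_union (holeClause_mem_WPHPneg (p := p) (q := #T + 1)
      (by grind) (by grind) (by grind) (hT hj)) ?_
    simp only [holeClause, avoidNode]
    grind

theorem isHyperresolvent_outsideNode (hnm : n < m) (hT : T ⊆ Icc 1 n) (hne : T.Nonempty) :
    IsHyperresolvent (axiomNodes (WPHPneg m n) ∪ phpNodes n) n (outsideNode n T) := by
  have hcard : #T ≤ n := by simpa using card_le_card hT
  have hvars : Icc 1 (#T + 1) ×ˢ T \ {#T + 1} ×ˢ T = Icc 1 #T ×ˢ T := by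
    ext ⟨p, q⟩
    grind
  refine ⟨{#T + 1} ×ˢ T, ?_, by simpa, by simpa, ?_, ?_⟩
  · exact product_subset_product_left (by simp)
  · refine derives_axiomNodes_union (pigeonClause_mem_WPHPneg (i := #T + 1) (by grind)) ?_
    rintro ⟨⟨p, q⟩, c⟩ hl
    simp only [outsideNode, outsideClause, pigeonClause] at hl ⊢
    grind [mem_posClause]
  · rintro ⟨p, j⟩ hx
    obtain ⟨hp, hj⟩ := mem_product.1 hx
    obtain rfl := mem_singleton.1 hp
    have hsub : outsideClause n #T T ⊆ outsideClause n (#T + 1) T := by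
      intro l
      simp only [outsideClause, mem_posClause]
      grind
    exact (Derives.of_mem (mem_union_right _ (avoidNode_mem_phpNodes hT hj))).mono
      (insert_subset_insert _ hsub) hvars.ge

theorem isHyperresolvent_of_mem_phpNodes (hnm : n < m) {u : Node (ℕ × ℕ)} (hu : u ∈ phpNodes n) :
    IsHyperresolvent (axiomNodes (WPHPneg m n) ∪ phpNodes n) n u := by
  rcases mem_union.1 hu with hu | hu
  · obtain ⟨T, hT, rfl⟩ := mem_image.1 hu
    obtain ⟨hne, hT⟩ := mem_erase.1 hT
    exact isHyperresolvent_outsideNode hnm (mem_powerset.1 hT) (nonempty_iff_ne_empty.2 hne)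
  · obtain ⟨⟨T, j⟩, hTj, rfl⟩ := mem_image.1 hu
    obtain ⟨hT, hj⟩ := mem_filter.1 hTj
    exact isHyperresolvent_avoidNode hnm (mem_powerset.1 (mem_product.1 hT).1) hj

theorem exists_regular_WPHPneg (hnm : n < m) :
    ∃ P : ResolutionProof (WPHPneg m n),
      P.Regular ∧ P.size ≤ m + m * (m * n) + 2 ^ n * (n + 1) * n := by
  have hempty : (outsideNode n (Icc 1 n)).1 = ∅ := by simp [outsideNode, outsideClause, posClause]
  obtain ⟨P, hP, hsize⟩ := exists_regular_of_isHyperresolvent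
    (fun _ => isHyperresolvent_of_mem_phpNodes hnm)
    (hempty ▸ derives_outsideNode (Nat.one_le_of_lt hnm) subset_rfl)
  refine ⟨P, hP, hsize.trans (Nat.add_le_add (card_WPHPneg_le m n) ?_)⟩
  exact Nat.mul_le_mul_right n (card_phpNodes_le n)

end

/-- there are constants `c > 0` and `k` such that for every `n ≥ 1`
the formula `¬PHP_n = ¬WPHP^{n+1}_n` has a Regular Resolution refutation of
length at most `c · 2^n · n^k`. -/
theorem php_trivial_upper_bound :
    ∃ c k : ℕ, 0 < c ∧ ∀ n : ℕ, 1 ≤ n →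
      ∃ P : ResolutionProof (WPHPneg (n + 1) n),
        P.Regular ∧ P.size ≤ c * 2 ^ n * n ^ k := by
  refine ⟨8, 3, by norm_num, fun n hn => ?_⟩
  obtain ⟨P, hP, hsize⟩ := exists_regular_WPHPneg n.lt_succ_self
  refine ⟨P, hP, hsize.trans ?_⟩
  have hsucc : n + 1 ≤ 2 * n := by lia
  calc (n + 1) + (n + 1) * ((n + 1) * n) + 2 ^ n * (n + 1) * n
      ≤ 2 * n + 2 * n * (2 * n * n) + 2 ^ n * (2 * n) * n := by gcongr
    _ ≤ 8 * 2 ^ n * n ^ 3 := by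
      have hlin : n ≤ n ^ 3 := Nat.le_self_pow (by norm_num) n
      have hsq : n ^ 2 ≤ n ^ 3 := Nat.pow_le_pow_right hn (by norm_num)
      have hpow : 1 ≤ 2 ^ n := Nat.one_le_two_pow
      nlinarith [Nat.mul_le_mul_left (2 ^ n) hsq, Nat.mul_le_mul_right (n ^ 3) hpow]
end
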